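/- Let H be a complex separable infinite-dimensional Hilbert space and let T be a bounded linear operator on H. If T has a perfectly spanning set of eigenvectors associated to unimodular eigenvalues, then T is frequently hypercyclic. -/

import Mathlib

open MeasureTheory Filter Topology

open scoped Classical in
/-- Lower density of a set of natural numbers. -/
noncomputable def lowerDensity (A : Set ℕ) : ℝ :=
  Filter.atTop.liminf fun N : ℕ =>
    (((Finset.range N).filter (fun n => n ∈ A)).card : ℝ) / (N : ℝ)

/-- `x` is a frequently hypercyclic vector for `T`. -/
def FreqHCVector {X : Type*} [NormedAddCommGroup X] [NormedSpace ℂ X]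
    (T : X →L[ℂ] X) (x : X) : Prop :=
  ∀ U : Set X, IsOpen U → U.Nonempty → 0 < lowerDensity {n : ℕ | (T ^ n) x ∈ U}

/-- `T` is frequently hypercyclic. -/
def FrequentlyHypercyclic {X : Type*} [NormedAddCommGroup X] [NormedSpace ℂ X]
    (T : X →L[ℂ] X) : Prop :=
  ∃ x : X, FreqHCVector T x

/-- `T` is hypercyclic. -/
def Hypercyclic {X : Type*} [NormedAddCommGroup X] [NormedSpace ℂ X]
    (T : X →L[ℂ] X) : Prop :=
  ∃ x : X, Dense (Set.range fun n : ℕ => (T ^ n) x)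

/-- `T` has a perfectly spanning set of eigenvectors associated to unimodular
eigenvalues: there is a continuous (atomless) probability measure `σ` on the unit
circle such that whenever `A` is a measurable subset of the circle with `σ A = 1`,
the span of the eigenspaces `ker (T - c)`, `c ∈ A`, is dense in `X`. -/
def PerfectlySpanning {X : Type*} [NormedAddCommGroup X] [NormedSpace ℂ X]
    (T : X →L[ℂ] X) : Prop :=
  ∃ σ : Measure ℂ, IsProbabilityMeasure σ ∧ (∀ c : ℂ, σ {c} = 0) ∧
    σ {c : ℂ | ‖c‖ = 1} = 1 ∧
    ∀ A : Set ℂ, A ⊆ {c : ℂ | ‖c‖ = 1} → MeasurableSet A → σ A = 1 →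
      Dense (Submodule.span ℂ (⋃ c ∈ A, {x : X | T x = c • x}) : Set X)


/-- Maximal ergodic lemma, in the form needed. -/
theorem aux_maximal {Ω : Type*} [MeasurableSpace Ω] {μ : Measure Ω} [IsProbabilityMeasure μ]
    {R : Ω → Ω} (hR : MeasurePreserving R μ μ) {f : Ω → ℝ} (hfm : Measurable f) {C : ℝ}
    (hfC : ∀ x, |f x| ≤ C)
    (h : ∀ᵐ x ∂μ, ∃ n : ℕ, 0 < birkhoffSum R f n x) : 0 ≤ ∫ x, f x ∂μ := by
  -- `M N = max_{n ≤ N} S_n`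
  let M : ℕ → Ω → ℝ := fun N => Nat.rec (fun _ => 0) (fun _ g x => max 0 (f x + g (R x))) N
  have hM0 : ∀ x, M 0 x = 0 := fun _ => rfl
  have hMs : ∀ N x, M (N+1) x = max 0 (f x + M N (R x)) := fun _ _ => rfl
  have hMnn : ∀ N x, 0 ≤ M N x := by
    intro N x
    cases N with
    | zero => simp [hM0]
    | succ N => rw [hMs]; exact le_max_left _ _
  have hMmono : ∀ N x, M N x ≤ M (N+1) x := by
    intro N
    induction N with
    | zero => intro x; rw [hM0]; exact hMnn (0+1) x
    | succ N ih => intro x; rw [hMs N, hMs (N+1)]; gcongr; exact ih _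
  have hMmeas : ∀ N, Measurable (M N) := by
    intro N
    induction N with
    | zero => exact measurable_const
    | succ N ih => exact measurable_const.max (hfm.add (ih.comp hR.measurable))
  have hC : 0 ≤ C := by
    obtain ⟨x⟩ : Nonempty Ω := by
      by_contra hne
      rw [not_nonempty_iff] at hne
      have := measure_univ (μ := μ)
      simp [Set.univ_eq_empty_iff.2 hne] at this
    exact (abs_nonneg _).trans (hfC x)
  have hMb : ∀ N x, M N x ≤ N * C := by
    intro N
    induction N with
    | zero => intro x; simp [hM0]
    | succ N ih =>
      intro x; rw [hMs]; push_cast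
      apply max_le
      · positivity
      · linarith [ih (R x), le_abs_self (f x), hfC x]
  have hMint : ∀ N, Integrable (M N) μ := fun N =>
    Integrable.of_bound (hMmeas N).aestronglyMeasurable (N * C)
      (ae_of_all _ fun x => by rw [Real.norm_eq_abs, abs_of_nonneg (hMnn N x)]; exact hMb N x)
  have hfint : Integrable f μ := Integrable.of_bound hfm.aestronglyMeasurable C
      (ae_of_all _ fun x => hfC x)
  have hSM : ∀ n x, birkhoffSum R f n x ≤ M n x := by
    intro n
    induction n with
    | zero => intro x; simp [hM0]
    | succ n ih => intro x; rw [birkhoffSum_succ', hMs]; exact le_max_of_le_right (by gcongr; exact ih _)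
  let E : ℕ → Set Ω := fun N => {x | 0 < M N x}
  have hEm : ∀ N, MeasurableSet (E N) := fun N => measurableSet_lt measurable_const (hMmeas N)
  have hEmono : Monotone E := monotone_nat_of_le_succ fun N x hx => lt_of_lt_of_le hx (hMmono N x)
  have hEint : ∀ N, 0 ≤ ∫ x in E N, f x ∂μ := by
    intro N
    have h1 : ∀ x, M N x - M N (R x) ≤ (E N).indicator f x := by
      intro x
      rcases Classical.em (x ∈ E N) with hx | hx
      · rw [Set.indicator_of_mem hx]
        have h2 : M N x ≤ max 0 (f x + M N (R x)) := by rw [← hMs]; exact hMmono N x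
        have h3 : 0 < M N x := hx
        rcases le_max_iff.1 h2 with h4 | h4 <;> linarith
      · rw [Set.indicator_of_notMem hx]
        have : M N x ≤ 0 := not_lt.1 hx
        linarith [hMnn N (R x)]
    have hc : Integrable (fun x => M N (R x)) μ := hR.integrable_comp_of_integrable (hMint N)
    have h5 : ∫ x, M N (R x) ∂μ = ∫ x, M N x ∂μ := by
      have := integral_map (μ := μ) hR.measurable.aemeasurable
        (f := M N) (hMmeas N).aestronglyMeasurable
      rw [hR.map_eq] at this
      exact this.symm
    rw [← integral_indicator (hEm N)]
    calc (0:ℝ) = ∫ x, (M N x - M N (R x)) ∂μ := by rw [integral_sub (hMint N) hc, h5, sub_self]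
      _ ≤ _ := integral_mono ((hMint N).sub hc) (hfint.indicator (hEm N)) h1
  have hlim := tendsto_setIntegral_of_monotone hEm hEmono hfint.integrableOn
  have h6 : ∫ x in ⋃ n, E n, f x ∂μ = ∫ x, f x ∂μ := by
    rw [← setIntegral_univ (μ := μ)]
    apply setIntegral_congr_set
    filter_upwards [h] with x hx
    obtain ⟨n, hn⟩ := hx
    apply propext
    refine ⟨fun _ => trivial, fun _ => ?_⟩
    exact Set.mem_iUnion.2 ⟨n, lt_of_lt_of_le hn (hSM n x)⟩
  rw [← h6]
  exact ge_of_tendsto' hlim hEint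

open scoped Classical in
/-- Visits to a set of positive measure have positive lower density, in an ergodic system. -/
theorem aux_density {Ω : Type*} [MeasurableSpace Ω] {μ : Measure Ω} [IsProbabilityMeasure μ]
    {R : Ω → Ω} (hR : Ergodic R μ) {W : Set Ω} (hW : MeasurableSet W) (hpos : 0 < μ W) :
    ∀ᵐ x ∂μ, 0 < lowerDensity {n : ℕ | R^[n] x ∈ W} := by
  let g : Ω → ℝ := W.indicator 1
  have hg : Measurable g := measurable_one.indicator hW
  have hg0 : ∀ x, 0 ≤ g x := fun x => Set.indicator_nonneg (by simp) x
  have hg1 : ∀ x, g x ≤ 1 := fun x => Set.indicator_le_self' (by simp) x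
  have hgint : ∫ x, g x ∂μ = μ.real W := by
    rw [integral_indicator_one hW]
  have hSm : ∀ n, Measurable (birkhoffSum R g n) := by
    intro n
    unfold birkhoffSum
    exact Finset.measurable_sum _ fun k _ => hg.comp (hR.measurable.iterate k)
  let A : Set Ω := {x | ∀ k : ℕ, ∀ N0 : ℕ, ∃ N, N0 ≤ N ∧ birkhoffSum R g N x < N / (k + 1)}
  have hAm : MeasurableSet A := by
    have : A = ⋂ k : ℕ, ⋂ N0 : ℕ, ⋃ N, ⋃ (_ : N0 ≤ N), {x | birkhoffSum R g N x < N / (k + 1)} := by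
      ext x; simp [A]
    rw [this]
    exact .iInter fun k => .iInter fun N0 => .iUnion fun N => .iUnion fun _ =>
      measurableSet_lt (hSm N) measurable_const
  have hAinv : A ⊆ R ⁻¹' A := by
    intro x hx k N0
    obtain ⟨N, hN, hlt⟩ := hx (2 * k + 1) (max N0 (2 * k + 2))
    refine ⟨N, (le_max_left _ _).trans hN, ?_⟩
    have h1 : (2 * k + 2 : ℝ) ≤ N := by exact_mod_cast (le_max_right _ _).trans hN
    have h2 : birkhoffSum R g N (R x) ≤ birkhoffSum R g N x + 1 := by
      have h3 := birkhoffSum_succ R g N x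
      rw [birkhoffSum_succ'] at h3
      linarith [hg0 x, hg1 (R^[N] x)]
    push_cast at hlt
    have hk : (0:ℝ) < k + 1 := by positivity
    have h4 : (N : ℝ) / (2 * k + 1 + 1) = N / (k+1) / 2 := by
      field_simp; ring
    have h5 : 2 ≤ (N:ℝ) / (k+1) := by rw [le_div_iff₀ hk]; linarith
    rw [h4] at hlt
    linarith
  have hA0 : ∀ᵐ x ∂μ, x ∉ A := by
    have := hR.ae_empty_or_univ_of_ae_le_preimage hAm.nullMeasurableSet
      (LE.le.eventuallyLE hAinv)
    rcases this with h | h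
    · filter_upwards [h] with x hx hxA
      exact (hx.mp hxA : x ∈ (∅ : Set Ω))
    · exfalso
      have key : ∀ k : ℕ, μ.real W ≤ 1 / (k + 1) := by
        intro k
        have hm := aux_maximal (C := 2) hR.toMeasurePreserving
          (f := fun x => 1 / (k + 1 : ℝ) - g x) (measurable_const.sub hg) (by
            intro x
            have h1 : (0:ℝ) < 1 / (k+1) := by positivity
            have h2 : (1:ℝ) / (k+1) ≤ 1 := by
              rw [div_le_one (by positivity)]; linarith [Nat.cast_nonneg (α := ℝ) k]
            rw [abs_le]; constructor <;> linarith [hg0 x, hg1 x]) (by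
            filter_upwards [h] with x hx
            have hxA : x ∈ A := hx.mpr trivial
            obtain ⟨N, -, hN⟩ := hxA k 0
            refine ⟨N, ?_⟩
            have : birkhoffSum R (fun x => 1 / (k + 1 : ℝ) - g x) N x
                = N / (k+1) - birkhoffSum R g N x := by
              simp [birkhoffSum, Finset.sum_sub_distrib]
              ring
            rw [this]; linarith)
        rw [integral_sub (integrable_const _) (Integrable.of_bound hg.aestronglyMeasurable 1
          (ae_of_all _ fun x => by
            rw [Real.norm_eq_abs, abs_of_nonneg (hg0 x)]; exact hg1 x)), hgint] at hm
        simp at hm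
        simpa using hm
      have h0 : 0 < μ.real W := ENNReal.toReal_pos hpos.ne' (measure_ne_top _ _)
      obtain ⟨n, hn⟩ := exists_nat_one_div_lt h0
      linarith [key n]
  filter_upwards [hA0] with x hx
  simp only [A, Set.mem_ofPred_eq, not_forall, not_exists, not_and, not_lt] at hx
  obtain ⟨k, N0, hx⟩ := hx
  have hk : (0:ℝ) < 1 / (k + 1) := by positivity
  refine lt_of_lt_of_le hk ?_
  unfold lowerDensity
  refine le_liminf_of_le ?_ ?_
  · refine IsBoundedUnder.isCoboundedUnder_ge ⟨1, ?_⟩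
    rw [eventually_map]
    refine Eventually.of_forall fun N => ?_
    apply div_le_one_of_le₀ _ (Nat.cast_nonneg _)
    exact_mod_cast (Finset.card_filter_le _ _).trans (by simp)
  · filter_upwards [eventually_ge_atTop (max N0 1)] with N hN
    have h1 := hx N ((le_max_left _ _).trans hN)
    have hN1 : (0:ℝ) < N := by exact_mod_cast (le_max_right _ _).trans hN
    rw [le_div_iff₀ hN1]
    calc 1 / (k + 1 : ℝ) * N = N / (k+1) := by ring
      _ ≤ _ := h1
      _ = _ := by
        simp only [birkhoffSum, g, Set.indicator_apply, Pi.one_apply]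
        rw [Finset.sum_boole]

noncomputable instance auxMeasCircle : MeasurableSpace Circle := borel Circle
instance auxBorelCircle : BorelSpace Circle := ⟨rfl⟩
instance auxPolishCircle : PolishSpace Circle := inferInstance

/-- Coordinates as bounded continuous functions. -/
noncomputable def auxCoord {ι : Type*} (i : ι) :
    BoundedContinuousFunction (ι → Circle) ℂ :=
  BoundedContinuousFunction.mkOfCompact ⟨fun ω => (ω i : ℂ), by fun_prop⟩

theorem auxCoord_apply {ι : Type*} (i : ι) (ω : ι → Circle) : auxCoord i ω = (ω i : ℂ) := rfl

/-- A rotation by a rationally independent family is uniquely ergodic. -/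
theorem aux_unique {ι : Type*} [Countable ι] (lam : ι → Circle)
    (hlam : LinearIndependent ℤ (fun i => Additive.ofMul (lam i)))
    (P Q : Measure (ι → Circle)) [IsProbabilityMeasure P] [IsProbabilityMeasure Q]
    (hP : MeasurePreserving (fun ω => lam * ω) P P)
    (hQ : MeasurePreserving (fun ω => lam * ω) Q Q) : P = Q := by
  let S : Set (BoundedContinuousFunction (ι → Circle) ℂ) := Set.range auxCoord
  refine ext_of_forall_mem_subalgebra_integral_eq_of_polish (𝕜 := ℂ)
    (A := StarAlgebra.adjoin ℂ S) ?_ ?_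
  · intro ω ω' hne
    obtain ⟨i, hi⟩ := Function.ne_iff.1 hne
    refine ⟨fun ω => (ω i : ℂ), ⟨(auxCoord i).toContinuousMap, ?_, rfl⟩, ?_⟩
    · exact ⟨auxCoord i, StarAlgebra.subset_adjoin ℂ S ⟨i, rfl⟩, rfl⟩
    · exact fun h => hi (Circle.ext h)
  · -- every monomial is a character
    have hchar : ∀ g ∈ Submonoid.closure (S ∪ star S), ∃ n : ι →₀ ℤ,
        ∀ ω, g ω = ((n.prod fun i k => ω i ^ k : Circle) : ℂ) := by
      intro g hg
      induction hg using Submonoid.closure_induction with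
      | mem x h =>
        rcases h with ⟨i, rfl⟩ | ⟨i, hi⟩
        · refine ⟨Finsupp.single i 1, fun ω => ?_⟩
          rw [Finsupp.prod_single_index (by simp), auxCoord_apply, zpow_one]
        · refine ⟨Finsupp.single i (-1), fun ω => ?_⟩
          have : x = star (auxCoord i) := by rw [hi, star_star]
          rw [Finsupp.prod_single_index (by simp), this, BoundedContinuousFunction.star_apply,
            auxCoord_apply]
          rw [zpow_neg_one, Circle.coe_inv_eq_conj]
          rfl
      | one => exact ⟨0, fun ω => by simp⟩
      | mul x y hx hy hx' hy' =>
        obtain ⟨n, hn⟩ := hx'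
        obtain ⟨m, hm⟩ := hy'
        refine ⟨n + m, fun ω => ?_⟩
        classical
        rw [Finsupp.prod_add_index' (by simp) (by intro i a b; rw [zpow_add])]
        simp [hn, hm]
    have hInt0 : ∀ g ∈ Submonoid.closure (S ∪ star S), ∫ ω, g ω ∂P = ∫ ω, g ω ∂Q := by
      intro g hg
      obtain ⟨n, hn⟩ := hchar g hg
      by_cases h0 : n = 0
      · subst h0
        simp [hn]
      · have hne : (n.prod fun i k => lam i ^ k) ≠ 1 := by
          intro h1
          apply h0
          rw [linearIndependent_iff] at hlam
          apply hlam
          rw [Finsupp.linearCombination_apply]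
          have := congrArg Additive.ofMul h1
          rw [Finsupp.prod, ofMul_prod] at this
          simpa [Finsupp.sum] using this
        have hrot : ∀ ω, g (lam * ω) = ((n.prod fun i k => lam i ^ k : Circle) : ℂ) * g ω := by
          intro ω
          rw [hn, hn, ← Circle.coe_mul, ← Finsupp.prod_mul]
          simp [mul_zpow]
        have hz : ∀ (P : Measure (ι → Circle)),
            MeasurePreserving (fun ω => lam * ω) P P → ∫ ω, g ω ∂P = 0 := by
          intro P hP
          have h1 := integral_map (μ := P) hP.measurable.aemeasurable
            (f := g) (by rw [hP.map_eq]; exact g.continuous.aestronglyMeasurable)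
          rw [hP.map_eq] at h1
          simp_rw [hrot] at h1
          rw [integral_const_mul] at h1
          have h2 : (1 - ((n.prod fun i k => lam i ^ k : Circle) : ℂ)) * ∫ ω, g ω ∂P = 0 := by
            linear_combination h1
          rcases mul_eq_zero.1 h2 with h3 | h3
          · exact absurd (Circle.ext (by rw [Circle.coe_one]; linear_combination -h3)) hne
          · exact h3
        rw [hz P hP, hz Q hQ]
    intro g hg
    have hg' : g ∈ Submodule.span ℂ (Submonoid.closure (S ∪ star S) :
        Set (BoundedContinuousFunction (ι → Circle) ℂ)) := by
      rw [← Algebra.adjoin_eq_span, ← StarAlgebra.adjoin_toSubalgebra]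
      exact hg
    induction hg' using Submodule.span_induction with
    | mem x h => exact hInt0 x h
    | zero => simp
    | add x y hx hy hx' hy' =>
      have hx'' := hx' (by
        rw [← Algebra.adjoin_eq_span, ← StarAlgebra.adjoin_toSubalgebra] at hx; exact hx)
      have hy'' := hy' (by
        rw [← Algebra.adjoin_eq_span, ← StarAlgebra.adjoin_toSubalgebra] at hy; exact hy)
      simp only [BoundedContinuousFunction.coe_add, Pi.add_apply]
      rw [integral_add (x.integrable P) (y.integrable P),
        integral_add (x.integrable Q) (y.integrable Q), hx'', hy'']
    | smul a x hx hx' =>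
      have hx'' := hx' (by
        rw [← Algebra.adjoin_eq_span, ← StarAlgebra.adjoin_toSubalgebra] at hx; exact hx)
      simp only [BoundedContinuousFunction.coe_smul]
      rw [integral_smul, integral_smul, hx'']

theorem aux_ergodic {ι : Type*} [Countable ι] (lam : ι → Circle)
    (hlam : LinearIndependent ℤ (fun i => Additive.ofMul (lam i)))
    (μ : Measure (ι → Circle)) [IsProbabilityMeasure μ] [μ.IsMulLeftInvariant] :
    Ergodic (fun ω => lam * ω) μ := by
  have hmp : MeasurePreserving (fun ω => lam * ω) μ μ := measurePreserving_mul_left μ lam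
  refine { hmp with aeconst_set := ?_ }
  intro s hs hinv
  rw [eventuallyConst_set]
  by_cases h0 : μ s = 0
  · right
    exact measure_eq_zero_iff_ae_notMem.1 h0
  · left
    have : IsProbabilityMeasure (ProbabilityTheory.cond μ s) :=
      ProbabilityTheory.cond_isProbabilityMeasure h0
    have hres : MeasurePreserving (fun ω => lam * ω) (ProbabilityTheory.cond μ s)
        (ProbabilityTheory.cond μ s) := by
      have h1 := hmp.restrict_preimage hs
      rw [hinv] at h1
      exact h1.smul_measure _
    have heq := aux_unique lam hlam _ μ hres hmp
    have h2 : μ sᶜ = 0 := by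
      rw [← heq, ProbabilityTheory.cond_apply hs]
      simp
    filter_upwards [measure_eq_zero_iff_ae_notMem.1 h2] with ω hω
    exact Set.notMem_compl_iff.1 hω

theorem aux_integrable {ι : Type*} [Countable ι] {μ : Measure (ι → Circle)}
    [IsProbabilityMeasure μ] {f : (ι → Circle) → ℝ} (hf : Continuous f) : Integrable f μ := by
  have := hf.continuousOn.integrableOn_compact (μ := μ) isCompact_univ
  rwa [integrableOn_univ] at this

open scoped Classical in
theorem aux_moment {H : Type*} [NormedAddCommGroup H] [InnerProductSpace ℂ H]
    {ι : Type*} [Countable ι] (x : ι → H)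
    (μ : Measure (ι → Circle)) [IsProbabilityMeasure μ] [μ.IsMulLeftInvariant]
    {B : Set (ι → Circle)} (hB : MeasurableSet B) (s : Finset ι)
    (hinv : ∀ k ∈ s, ∀ ω, Pi.mulSingle k (-1) * ω ∈ B ↔ ω ∈ B) :
    ∫ ω in B, ‖∑ k ∈ s, (ω k : ℂ) • x k‖ ^ 2 ∂μ = μ.real B * ∑ k ∈ s, ‖x k‖ ^ 2 := by
  induction s using Finset.induction_on with
  | empty => simp
  | insert k s hk ih =>
    specialize ih fun i hi => hinv i (Finset.mem_insert_of_mem hi)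
    let r : (ι → Circle) → H := fun ω => ∑ i ∈ s, (ω i : ℂ) • x i
    have hr : Continuous r := by fun_prop
    have hrflip : ∀ ω, r (Pi.mulSingle k (-1) * ω) = r ω := by
      intro ω
      refine Finset.sum_congr rfl fun i hi => ?_
      have hik : i ≠ k := fun h => hk (h ▸ hi)
      simp [Pi.mulSingle_eq_of_ne hik]
    have h1 : ∫ ω in B, ‖(ω k : ℂ) • x k + r ω‖ ^ 2 ∂μ
        = ∫ ω in B, ‖(ω k : ℂ) • x k - r ω‖ ^ 2 ∂μ := by
      rw [← integral_indicator hB, ← integral_indicator hB,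
        ← integral_mul_left_eq_self _ (Pi.mulSingle k (-1))]
      refine integral_congr_ae (ae_of_all _ fun ω => ?_)
      have hb := hinv k (Finset.mem_insert_self _ _) ω
      simp only [Set.indicator_apply, hb, hrflip]
      congr 1
      have : ((Pi.mulSingle k (-1) * ω : ι → Circle) k : ℂ) = - (ω k : ℂ) := by
        simp
      rw [this, neg_smul, ← norm_neg]
      congr 2
      abel
    have h2 : ∫ ω in B, ‖(ω k : ℂ) • x k + r ω‖ ^ 2 ∂μ
        + ∫ ω in B, ‖(ω k : ℂ) • x k - r ω‖ ^ 2 ∂μ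
        = 2 * (μ.real B * ‖x k‖ ^ 2 + ∫ ω in B, ‖r ω‖ ^ 2 ∂μ) := by
      rw [← integral_add (aux_integrable (by fun_prop)).integrableOn
        (aux_integrable (by fun_prop)).integrableOn]
      have : ∀ ω : ι → Circle, ‖(ω k : ℂ) • x k + r ω‖ ^ 2 + ‖(ω k : ℂ) • x k - r ω‖ ^ 2
          = 2 * (‖x k‖ ^ 2 + ‖r ω‖ ^ 2) := by
        intro ω
        have := parallelogram_law_with_norm ℂ ((ω k : ℂ) • x k) (r ω)
        rw [norm_smul, Circle.norm_coe, one_mul] at this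
        linear_combination this
      simp_rw [this]
      rw [integral_const_mul, integral_add (integrable_const _)
        (aux_integrable (by fun_prop)).integrableOn, setIntegral_const, smul_eq_mul]
    simp_rw [Finset.sum_insert hk]
    change ∫ ω in B, ‖(ω k : ℂ) • x k + r ω‖ ^ 2 ∂μ = _
    change ∫ ω in B, ‖r ω‖ ^ 2 ∂μ = _ at ih
    rw [← h1, ih] at h2
    linear_combination h2 / 2

open scoped Classical in
theorem aux_moment1 {H : Type*} [NormedAddCommGroup H] [InnerProductSpace ℂ H]
    {ι : Type*} [Countable ι] (x : ι → H)
    (μ : Measure (ι → Circle)) [IsProbabilityMeasure μ] [μ.IsMulLeftInvariant]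
    {B : Set (ι → Circle)} (hB : MeasurableSet B) (s : Finset ι)
    (hinv : ∀ k ∈ s, ∀ ω, Pi.mulSingle k (-1) * ω ∈ B ↔ ω ∈ B) {c : ℝ} (hc : 0 < c)
    (hs : ∑ k ∈ s, ‖x k‖ ^ 2 ≤ c ^ 2) :
    ∫⁻ ω in B, ‖∑ k ∈ s, (ω k : ℂ) • x k‖ₑ ∂μ ≤ ENNReal.ofReal c * μ B := by
  let r : (ι → Circle) → H := fun ω => ∑ i ∈ s, (ω i : ℂ) • x i
  have hr : Continuous r := by fun_prop
  have h1 : ∫ ω in B, ‖r ω‖ ∂μ ≤ c * μ.real B := by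
    calc ∫ ω in B, ‖r ω‖ ∂μ ≤ ∫ ω in B, ((1 / (2 * c)) * ‖r ω‖ ^ 2 + c / 2) ∂μ := by
          refine integral_mono (aux_integrable (by fun_prop)).integrableOn
            (aux_integrable (by fun_prop)).integrableOn fun ω => ?_
          have : 0 ≤ (1 / (2 * c)) * (‖r ω‖ - c) ^ 2 := by positivity
          have h2 : (1 / (2 * c)) * (‖r ω‖ - c) ^ 2
            = (1 / (2 * c)) * ‖r ω‖ ^ 2 + c / 2 - ‖r ω‖ := by field_simp; ring
          change ‖r ω‖ ≤ (1 / (2 * c)) * ‖r ω‖ ^ 2 + c / 2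
          linarith
      _ = (1 / (2 * c)) * (μ.real B * ∑ k ∈ s, ‖x k‖ ^ 2) + μ.real B * (c / 2) := by
          rw [integral_add (aux_integrable (by fun_prop)).integrableOn (integrable_const _),
            integral_const_mul, aux_moment x μ hB s hinv, setIntegral_const, smul_eq_mul]
      _ ≤ (1 / (2 * c)) * (μ.real B * c ^ 2) + μ.real B * (c / 2) := by gcongr
      _ = c * μ.real B := by field_simp; ring
  have h3 : ∀ ω, ‖r ω‖ₑ = ENNReal.ofReal ‖r ω‖ := fun ω => (ofReal_norm _).symm
  change ∫⁻ ω in B, ‖r ω‖ₑ ∂μ ≤ _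
  simp_rw [h3]
  rw [← ofReal_integral_eq_lintegral_ofReal (aux_integrable (by fun_prop)).integrableOn
    (ae_of_all _ fun ω => norm_nonneg _)]
  refine (ENNReal.ofReal_le_ofReal h1).trans ?_
  rw [ENNReal.ofReal_mul hc.le, ofReal_measureReal]

theorem aux_lowerDensity_mono {A B : Set ℕ} (h : A ⊆ B) : lowerDensity A ≤ lowerDensity B := by
  classical
  unfold lowerDensity
  refine liminf_le_liminf ?_ ?_ ?_
  · refine Eventually.of_forall fun N => ?_
    gcongr
  · refine isBoundedUnder_of_eventually_ge (a := 0) (Eventually.of_forall fun N => by positivity)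
  · refine IsBoundedUnder.isCoboundedUnder_ge ⟨1, ?_⟩
    rw [eventually_map]
    refine Eventually.of_forall fun N => ?_
    apply div_le_one_of_le₀ _ (Nat.cast_nonneg _)
    exact_mod_cast (Finset.card_filter_le _ _).trans (by simp)

open scoped Classical in
theorem aux_main {H : Type*} [NormedAddCommGroup H] [InnerProductSpace ℂ H] [CompleteSpace H]
    (T : H →L[ℂ] H) {ι : Type*} [Countable ι] (lam : ι → Circle)
    (hlam : LinearIndependent ℤ (fun i => Additive.ofMul (lam i)))
    (x : ι → H) (hx : ∀ i, T (x i) = (lam i : ℂ) • x i)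
    (F : ℕ → Finset ι) (hmono : Monotone F) (hF0 : F 0 = ∅) (v : ℕ → H)
    (hsq : ∀ j, ∑ k ∈ F (j+1) \ F j, ‖x k‖ ^ 2 ≤ ((1/2 : ℝ) ^ j) ^ 2)
    (happ : ∀ j, ‖∑ k ∈ F (j+1), x k - v j‖ < (1/2 : ℝ) ^ j)
    (hv : ∀ p : H, ∀ ε > 0, ∀ N : ℕ, ∃ j, N ≤ j ∧ ‖v j - p‖ < ε) :
    FrequentlyHypercyclic T := by
  let μ : Measure (ι → Circle) := Measure.haarMeasure ⊤
  have hprob : IsProbabilityMeasure μ := ⟨by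
    have := Measure.haarMeasure_self (G := ι → Circle) (K₀ := ⊤)
    simpa using this⟩
  let R : (ι → Circle) → (ι → Circle) := fun ω => lam * ω
  have hR : Ergodic R μ := aux_ergodic lam hlam μ
  let S : Finset ι → (ι → Circle) → H := fun s ω => ∑ k ∈ s, (ω k : ℂ) • x k
  have hScont : ∀ s, Continuous (S s) := fun s => by fun_prop
  have hST : ∀ s ω, T (S s ω) = S s (R ω) := by
    intro s ω
    simp only [S, map_sum, map_smul, hx]
    refine Finset.sum_congr rfl fun i _ => ?_
    rw [smul_smul]
    simp [R, mul_comm]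
  have hSTn : ∀ s n ω, (T ^ n) (S s ω) = S s (R^[n] ω) := by
    intro s n
    induction n with
    | zero => intro ω; simp
    | succ n ih => intro ω; rw [pow_succ, mul_apply_eq_comp, hST, ih]; rfl
  let b : ℕ → (ι → Circle) → H := fun j => S (F (j+1) \ F j)
  have hbm : ∀ j, Measurable fun ω => ‖b j ω‖ₑ := fun j => (hScont _).enorm.measurable
  have hhead : ∀ j ω, ∑ i ∈ Finset.range j, b i ω = S (F j) ω := by
    intro j ω
    induction j with
    | zero => simp [S, hF0]
    | succ j ih =>
      rw [Finset.sum_range_succ, ih, add_comm]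
      exact Finset.sum_sdiff (hmono (Nat.le_succ j))
  -- almost sure absolute convergence
  have hsum : ∀ᵐ ω ∂μ, ∑' j, ‖b j ω‖ₑ < ⊤ := by
    refine ae_lt_top (Measurable.tsum hbm) ?_
    rw [lintegral_tsum fun j => (hbm j).aemeasurable]
    have h1 : ∀ j, ∫⁻ ω, ‖b j ω‖ₑ ∂μ ≤ ENNReal.ofReal ((1/2 : ℝ) ^ j) := by
      intro j
      have := aux_moment1 x μ MeasurableSet.univ (F (j+1) \ F j) (by simp)
        (c := (1/2 : ℝ) ^ j) (by positivity) (hsq j)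
      simpa using this
    refine ne_top_of_le_ne_top ?_ (ENNReal.tsum_le_tsum h1)
    rw [← ENNReal.ofReal_tsum_of_nonneg (fun n => by positivity) summable_geometric_two]
    exact ENNReal.ofReal_ne_top
  let B : ℕ → Set (ι → Circle) := fun j => {ω | ‖S (F (j+1)) ω - v j‖ < (1/2 : ℝ) ^ j}
  let W : ℕ → Set (ι → Circle) := fun j =>
    B j ∩ {ω | ∑' i, ‖b (i + (j+1)) ω‖ₑ < 2 * ENNReal.ofReal ((1/2 : ℝ) ^ j)}
  have hBo : ∀ j, IsOpen (B j) := fun j =>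
    isOpen_lt ((hScont _).sub continuous_const).norm continuous_const
  have htm : ∀ j, Measurable fun ω => ∑' i, ‖b (i + (j+1)) ω‖ₑ := fun j =>
    Measurable.tsum fun i => hbm _
  have hWm : ∀ j, MeasurableSet (W j) := fun j =>
    (hBo j).measurableSet.inter (measurableSet_lt (htm j) measurable_const)
  have hWpos : ∀ j, 0 < μ (W j) := by
    intro j
    rw [pos_iff_ne_zero]
    intro h0
    have hBpos : 0 < μ (B j) := by
      refine (hBo j).measure_pos μ ⟨1, ?_⟩
      simpa [B, S] using happ j
    have hup : ∫⁻ ω in B j, ∑' i, ‖b (i + (j+1)) ω‖ₑ ∂μ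
        ≤ ENNReal.ofReal ((1/2 : ℝ) ^ j) * μ (B j) := by
      rw [lintegral_tsum fun i => (hbm _).aemeasurable]
      have h1 : ∀ i, ∫⁻ ω in B j, ‖b (i + (j+1)) ω‖ₑ ∂μ
          ≤ ENNReal.ofReal ((1/2 : ℝ) ^ (i + (j+1))) * μ (B j) := by
        intro i
        refine aux_moment1 x μ (hBo j).measurableSet (F (i+(j+1)+1) \ F (i+(j+1))) ?_
          (by positivity) (hsq _)
        intro k hk ω
        have hk' : k ∉ F (j+1) := fun h =>
          (Finset.mem_sdiff.1 hk).2 (hmono (by omega) h)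
        have : S (F (j+1)) (Pi.mulSingle k (-1) * ω) = S (F (j+1)) ω := by
          refine Finset.sum_congr rfl fun i hi => ?_
          have hik : i ≠ k := fun h => hk' (h ▸ hi)
          simp [Pi.mulSingle_eq_of_ne hik]
        change ‖_ - _‖ < _ ↔ ‖_ - _‖ < _
        rw [this]
      refine (ENNReal.tsum_le_tsum h1).trans ?_
      rw [ENNReal.tsum_mul_right]
      gcongr
      have hs : Summable fun i : ℕ => (1/2 : ℝ) ^ (i + (j+1)) :=
        (summable_nat_add_iff (j+1)).2 summable_geometric_two
      rw [← ENNReal.ofReal_tsum_of_nonneg (fun n => by positivity) hs]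
      refine ENNReal.ofReal_le_ofReal (le_of_eq ?_)
      simp_rw [pow_add, pow_one]
      rw [tsum_mul_right, tsum_geometric_two]
      ring
    have hlow : 2 * ENNReal.ofReal ((1/2 : ℝ) ^ j) * μ (B j)
        ≤ ∫⁻ ω in B j, ∑' i, ‖b (i + (j+1)) ω‖ₑ ∂μ := by
      rw [← setLIntegral_const]
      refine lintegral_mono_ae ?_
      rw [ae_restrict_iff' (hBo j).measurableSet]
      filter_upwards [measure_eq_zero_iff_ae_notMem.1 h0] with ω hω hωB
      by_contra hlt
      exact hω ⟨hωB, not_le.1 hlt⟩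
    have h2 := hlow.trans hup
    rw [ENNReal.mul_le_mul_iff_left hBpos.ne' (measure_ne_top _ _)] at h2
    have h3 : ENNReal.ofReal ((1/2 : ℝ) ^ j) ≠ 0 := by
      rw [Ne, ENNReal.ofReal_eq_zero, not_le]; positivity
    have h4 : ENNReal.ofReal ((1/2 : ℝ) ^ j) < 2 * ENNReal.ofReal ((1/2 : ℝ) ^ j) := by
      rw [two_mul]
      exact ENNReal.lt_add_right ENNReal.ofReal_ne_top h3
    exact absurd h2 (not_le.2 h4)
  have hae : ∀ᵐ ω ∂μ, ∀ j, 0 < lowerDensity {n : ℕ | R^[n] ω ∈ W j} :=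
    ae_all_iff.2 fun j => aux_density hR (hWm j) (hWpos j)
  obtain ⟨ω, hω1, hω2⟩ := (hsum.and hae).exists
  have hsummable : Summable fun j => b j ω := by
    apply Summable.of_norm
    rw [← tsum_enorm_ne_top_iff_summable_norm]
    exact hω1.ne
  refine ⟨∑' j, b j ω, fun U hU hne => ?_⟩
  obtain ⟨p, hp⟩ := hne
  obtain ⟨δ, hδ, hball⟩ := Metric.isOpen_iff.1 hU p hp
  obtain ⟨N, hN⟩ := exists_pow_lt_of_lt_one (show 0 < δ / 6 by positivity)
    (show (1/2 : ℝ) < 1 by norm_num)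
  obtain ⟨j, hj, hjp⟩ := hv p (δ / 2) (by positivity) N
  refine (hω2 j).trans_le (aux_lowerDensity_mono ?_)
  intro n hn
  apply hball
  have hcj : (1/2 : ℝ) ^ j < δ / 6 :=
    (pow_le_pow_of_le_one (by norm_num) (by norm_num) hj).trans_lt hN
  obtain ⟨hn1, hn2⟩ : R^[n] ω ∈ W j := hn
  have e1 : (T ^ n) (∑' j, b j ω) = ∑' j, b j (R^[n] ω) := by
    rw [ContinuousLinearMap.map_tsum _ hsummable]
    exact tsum_congr fun j => hSTn _ _ _
  have hs2 : Summable fun j => b j (R^[n] ω) := by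
    have := hsummable.map (T ^ n) (T ^ n).continuous
    refine this.congr fun j => ?_
    exact hSTn _ _ _
  have e2 := hs2.sum_add_tsum_nat_add (j + 1)
  rw [hhead] at e2
  have e3 : ‖∑' i, b (i + (j+1)) (R^[n] ω)‖ < 2 * (1/2 : ℝ) ^ j := by
    have h1 : ‖∑' i, b (i + (j+1)) (R^[n] ω)‖ₑ ≤ ∑' i, ‖b (i + (j+1)) (R^[n] ω)‖ₑ :=
      enorm_tsum_le_tsum_enorm
    have h2 := lt_of_le_of_lt h1 hn2
    rw [← ofReal_norm, ← ENNReal.ofReal_ofNat, ← ENNReal.ofReal_mul (by norm_num)] at h2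
    exact (ENNReal.ofReal_lt_ofReal_iff (by positivity)).1 h2
  have e4 : ‖S (F (j+1)) (R^[n] ω) - v j‖ < (1/2 : ℝ) ^ j := hn1
  rw [Metric.mem_ball, dist_eq_norm, e1, ← e2]
  calc ‖S (F (j+1)) (R^[n] ω) + ∑' i, b (i + (j+1)) (R^[n] ω) - p‖
      = ‖(S (F (j+1)) (R^[n] ω) - v j) + ∑' i, b (i + (j+1)) (R^[n] ω) + (v j - p)‖ := by
        congr 1; abel
    _ ≤ ‖S (F (j+1)) (R^[n] ω) - v j‖ + ‖∑' i, b (i + (j+1)) (R^[n] ω)‖ + ‖v j - p‖ :=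
        norm_add₃_le
    _ < δ := by linarith

/-- `u` is approximable by eigenvectors for uncountably many unimodular eigenvalues. -/
def AuxGood {H : Type*} [NormedAddCommGroup H] [InnerProductSpace ℂ H] (T : H →L[ℂ] H)
    (u : H) : Prop :=
  ∀ ε > 0, ¬ {c : Circle | ∃ y, ‖y - u‖ < ε ∧ T y = (c : ℂ) • y}.Countable

theorem AuxGood.smul {H : Type*} [NormedAddCommGroup H] [InnerProductSpace ℂ H]
    {T : H →L[ℂ] H} {u : H} (h : AuxGood T u) (a : ℂ) : AuxGood T (a • u) := by
  intro ε hε hc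
  refine h (ε / (‖a‖ + 1)) (by positivity) (hc.mono ?_)
  rintro c ⟨y, hy, hTy⟩
  refine ⟨a • y, ?_, ?_⟩
  · rw [← smul_sub, norm_smul]
    rw [lt_div_iff₀ (by positivity)] at hy
    nlinarith [norm_nonneg (y - u), norm_nonneg a]
  · rw [map_smul, hTy, smul_comm]

theorem aux_dense {H : Type*} [NormedAddCommGroup H] [InnerProductSpace ℂ H]
    [TopologicalSpace.SeparableSpace H] {T : H →L[ℂ] H} (hT : PerfectlySpanning T) :
    Dense (Submodule.span ℂ {u : H | AuxGood T u} : Set H) := by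
  obtain ⟨σ, hσ, hat, hcirc, hspan⟩ := hT
  have : SecondCountableTopology H := UniformSpace.secondCountable_of_separable H
  let eig : Set H → Set Circle := fun V => {c | ∃ y ∈ V, T y = (c : ℂ) • y}
  let D : Set Circle := ⋃ V ∈ {V ∈ TopologicalSpace.countableBasis H | (eig V).Countable}, eig V
  have hD : D.Countable := by
    refine Set.Countable.biUnion ?_ fun V hV => hV.2
    exact (TopologicalSpace.countable_countableBasis H).mono fun V hV => hV.1
  let D' : Set ℂ := (fun c : Circle => (c : ℂ)) '' D
  have hD' : D'.Countable := hD.image _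
  have hD0 : σ D' = 0 := by
    rw [← Set.biUnion_of_singleton D', measure_biUnion_null_iff hD']
    exact fun c _ => hat c
  have hmc : MeasurableSet {c : ℂ | ‖c‖ = 1} := measurableSet_eq_fun (by fun_prop) (by fun_prop)
  have hd := hspan ({c : ℂ | ‖c‖ = 1} \ D') Set.sdiff_subset (hmc.diff hD'.measurableSet)
    (by rw [measure_sdiff_null hD0, hcirc])
  refine hd.mono (Submodule.span_mono ?_)
  intro u hu
  simp only [Set.mem_iUnion] at hu
  obtain ⟨c, ⟨hc1, hc2⟩, hTu⟩ := hu
  have hc1' : ‖c‖ = 1 := hc1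
  have hTu' : T u = c • u := hTu
  intro ε hε hcount
  apply hc2
  obtain ⟨V, hV, huV, hVs⟩ := (TopologicalSpace.isBasis_countableBasis H).exists_subset_of_mem_open
    (Metric.mem_ball_self hε : u ∈ Metric.ball u ε) Metric.isOpen_ball
  refine ⟨⟨c, by simp [Submonoid.unitSphere, hc1']⟩, ?_, rfl⟩
  refine Set.mem_biUnion (x := V) ⟨hV, hcount.mono ?_⟩ ⟨u, huV, hTu'⟩
  rintro d ⟨y, hy, hTy⟩
  exact ⟨y, by simpa [dist_eq_norm] using hVs hy, hTy⟩

/-- Multiplicative independence of a finite set of unimodular numbers. -/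
def AuxIndep (F : Finset Circle) : Prop :=
  LinearIndepOn ℤ (fun c : Circle => Additive.ofMul c) (F : Set Circle)

theorem aux_roots (r : ℤ) (hr : r ≠ 0) (g : Circle) : {c : Circle | c ^ r = g}.Countable := by
  have hn : 0 < r.natAbs := Int.natAbs_pos.2 hr
  have key : ∀ a : Circle, {c : Circle | c ^ r.natAbs = a}.Countable := by
    intro a
    refine Set.Finite.countable ?_
    refine Set.Finite.of_finite_image (f := fun c : Circle => (c : ℂ)) ?_
      (Circle.coe_injective.injOn)
    classical
    refine (Polynomial.nthRoots r.natAbs (a : ℂ)).toFinset.finite_toSet.subset ?_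
    rintro _ ⟨c, hc, rfl⟩
    have hc' : c ^ r.natAbs = a := hc
    simp only [Finset.mem_coe, Multiset.mem_toFinset]
    rw [Polynomial.mem_nthRoots hn, ← hc', Circle.coe_pow]
  refine ((key g).union (key g⁻¹)).mono ?_
  intro c hc
  have hc' : c ^ r = g := hc
  rcases Int.natAbs_eq r with h | h
  · left
    change c ^ r.natAbs = g
    rw [← hc', ← zpow_natCast, ← h]
  · right
    change c ^ r.natAbs = g⁻¹
    rw [← hc', ← zpow_natCast, ← zpow_neg]
    congr 1
    omega

theorem aux_insert {H : Type*} [NormedAddCommGroup H] [InnerProductSpace ℂ H] {T : H →L[ℂ] H}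
    {u : H} (hu : AuxGood T u) {ε : ℝ} (hε : 0 < ε) {F : Finset Circle} (hF : AuxIndep F) :
    ∃ c ∉ F, ∃ y, ‖y - u‖ < ε ∧ T y = (c : ℂ) • y ∧
      ∀ F' : Finset Circle, (F' : Set Circle) = insert c (F : Set Circle) → AuxIndep F' := by
  let v : Circle → Additive Circle := fun c => Additive.ofMul c
  let Sp : Set (Additive Circle) := Submodule.span ℤ (v '' (F : Set Circle))
  have hSp : Sp.Countable := by
    have : Sp = Set.range (Finsupp.linearCombination ℤ (fun c : (F : Set Circle) => v c)) := by
      rw [← LinearMap.coe_range, Finsupp.range_linearCombination]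
      simp only [Sp]
      rw [Set.image_eq_range]
    rw [this]
    exact Set.countable_range _
  let Bad : Set Circle := ⋃ r ∈ {r : ℤ | r ≠ 0}, ⋃ g ∈ Sp, {c : Circle | c ^ r = Additive.toMul g}
  have hBad : Bad.Countable := (Set.to_countable _).biUnion fun r hr =>
    hSp.biUnion fun g _ => aux_roots r hr _
  have hmem : ∀ (r : ℤ) (c : Circle), r ≠ 0 → r • v c ∈ Sp → c ∈ Bad := by
    intro r c hr hc
    refine Set.mem_biUnion (x := r) hr (Set.mem_biUnion (x := r • v c) hc ?_)
    rfl
  obtain ⟨c, ⟨y, hy, hTy⟩, hcB⟩ := Set.not_subset.1 fun h => hu ε hε (hBad.mono h)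
  refine ⟨c, ?_, y, hy, hTy, ?_⟩
  · intro hcF
    apply hcB
    refine hmem 1 c one_ne_zero ?_
    rw [one_smul]
    exact Submodule.subset_span ⟨c, hcF, rfl⟩
  · intro F' hF'
    unfold AuxIndep
    rw [hF']
    refine LinearIndepOn.insert' hF fun r hr => ?_
    by_contra hr0
    exact hcB (hmem r c hr0 hr)

open scoped Classical in
theorem aux_list {H : Type*} [NormedAddCommGroup H] [InnerProductSpace ℂ H] {T : H →L[ℂ] H}
    {F : Finset Circle} (hF : AuxIndep F) (x : Circle → H) (L : List H)
    (hL : ∀ u ∈ L, AuxGood T u) : ∀ δ > 0, ∃ (F' : Finset Circle) (x' : Circle → H),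
      F ⊆ F' ∧ AuxIndep F' ∧ (∀ c ∈ F, x' c = x c) ∧
      (∀ c ∈ F' \ F, T (x' c) = (c : ℂ) • x' c) ∧
      ∑ c ∈ F' \ F, ‖x' c‖ ^ 2 ≤ (L.map fun u => ‖u‖ ^ 2).sum + δ ∧
      ‖∑ c ∈ F' \ F, x' c - L.sum‖ ≤ δ := by
  induction L with
  | nil =>
    intro δ hδ
    exact ⟨F, x, subset_rfl, hF, fun _ _ => rfl, by simp, by simpa using hδ.le,
      by simpa using hδ.le⟩
  | cons u L ih =>
    intro δ hδ
    obtain ⟨F1, x1, hFF1, hF1, hx1, heig1, hsq1, happ1⟩ :=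
      ih (fun w hw => hL w (List.mem_cons_of_mem _ hw)) (δ / 2) (by positivity)
    let ε := min (δ / 2) (min 1 (δ / 2 / (2 * ‖u‖ + 1)))
    have hε : 0 < ε := by positivity
    obtain ⟨c, hc, y, hy, hTy, hind⟩ := aux_insert (hL u List.mem_cons_self) hε hF1
    have hcF : c ∉ F := fun h => hc (hFF1 h)
    have hins : insert c F1 \ F = insert c (F1 \ F) := Finset.insert_sdiff_of_notMem _ hcF
    have hc1 : c ∉ F1 \ F := fun h => hc (Finset.mem_sdiff.1 h).1
    have hne : ∀ d ∈ F1, Function.update x1 c y d = x1 d := fun d hd =>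
      Function.update_of_ne (show d ≠ c from fun h => hc (by rw [← h]; exact hd)) _ _
    refine ⟨insert c F1, Function.update x1 c y, hFF1.trans (Finset.subset_insert _ _),
      hind _ (Finset.coe_insert _ _), ?_, ?_, ?_, ?_⟩
    · intro d hd
      rw [hne d (hFF1 hd), hx1 d hd]
    · intro d hd
      rw [hins, Finset.mem_insert] at hd
      rcases hd with rfl | hd
      · simpa using hTy
      · rw [hne d (Finset.mem_sdiff.1 hd).1]
        exact heig1 d hd
    · rw [hins, Finset.sum_insert hc1, Function.update_self]
      have : ∑ d ∈ F1 \ F, ‖Function.update x1 c y d‖ ^ 2 = ∑ d ∈ F1 \ F, ‖x1 d‖ ^ 2 :=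
        Finset.sum_congr rfl fun d hd => by rw [hne d (Finset.mem_sdiff.1 hd).1]
      rw [this, List.map_cons, List.sum_cons]
      have h1 : ‖y‖ ≤ ‖u‖ + ε := by
        have := norm_add_le u (y - u)
        rw [add_sub_cancel] at this
        linarith
      have h2 : ε ≤ 1 := (min_le_right _ _).trans (min_le_left _ _)
      have h3 : ε * (2 * ‖u‖ + 1) ≤ δ / 2 := by
        rw [← le_div_iff₀ (by positivity)]
        exact (min_le_right _ _).trans (min_le_right _ _)
      have h4 : ‖y‖ ^ 2 ≤ ‖u‖ ^ 2 + δ / 2 := by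
        calc ‖y‖ ^ 2 ≤ (‖u‖ + ε) ^ 2 := by gcongr
          _ ≤ ‖u‖ ^ 2 + ε * (2 * ‖u‖ + 1) := by nlinarith
          _ ≤ _ := by linarith
      linarith
    · rw [hins, Finset.sum_insert hc1, Function.update_self]
      have : ∑ d ∈ F1 \ F, Function.update x1 c y d = ∑ d ∈ F1 \ F, x1 d :=
        Finset.sum_congr rfl fun d hd => by rw [hne d (Finset.mem_sdiff.1 hd).1]
      rw [this, List.sum_cons]
      have h2 : ε ≤ δ / 2 := min_le_left _ _
      calc ‖y + ∑ d ∈ F1 \ F, x1 d - (u + L.sum)‖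
          = ‖(y - u) + (∑ d ∈ F1 \ F, x1 d - L.sum)‖ := by congr 1; abel
        _ ≤ ‖y - u‖ + ‖∑ d ∈ F1 \ F, x1 d - L.sum‖ := norm_add_le _ _
        _ ≤ δ := by linarith

theorem aux_span {H : Type*} [NormedAddCommGroup H] [InnerProductSpace ℂ H] {T : H →L[ℂ] H}
    {w : H} (hw : w ∈ Submodule.span ℂ {u : H | AuxGood T u}) :
    ∃ L : List H, (∀ u ∈ L, AuxGood T u) ∧ L.sum = w := by
  induction hw using Submodule.span_induction with
  | mem x h => exact ⟨[x], by simpa using h, by simp⟩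
  | zero => exact ⟨[], by simp, by simp⟩
  | add x y _ _ hx hy =>
    obtain ⟨L, hL, rfl⟩ := hx
    obtain ⟨L', hL', rfl⟩ := hy
    refine ⟨L ++ L', ?_, by simp⟩
    intro u hu
    rcases List.mem_append.1 hu with h | h
    exacts [hL u h, hL' u h]
  | smul a x _ hx =>
    obtain ⟨L, hL, rfl⟩ := hx
    refine ⟨L.map (a • ·), ?_, List.smul_sum.symm⟩
    intro u hu
    obtain ⟨u', hu', rfl⟩ := List.mem_map.1 hu
    exact (hL u' hu').smul a

theorem aux_split {H : Type*} [NormedAddCommGroup H] [InnerProductSpace ℂ H] {T : H →L[ℂ] H}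
    (L : List H) (hL : ∀ u ∈ L, AuxGood T u) {η : ℝ} (hη : 0 < η) :
    ∃ L' : List H, (∀ u ∈ L', AuxGood T u) ∧ L'.sum = L.sum ∧
      (L'.map fun u => ‖u‖ ^ 2).sum ≤ η := by
  let K : ℝ := (L.map fun u => ‖u‖ ^ 2).sum
  obtain ⟨M, hM⟩ := exists_nat_gt (max 0 (K / η))
  have hM0 : (0:ℝ) < M := (le_max_left _ _).trans_lt hM
  have hMK : K / η < M := (le_max_right _ _).trans_lt hM
  let L1 : List H := L.map (((M : ℂ)⁻¹) • ·)
  refine ⟨(List.replicate M L1).flatten, ?_, ?_, ?_⟩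
  · intro u hu
    obtain ⟨l, hl, hul⟩ := List.mem_flatten.1 hu
    rw [List.eq_of_mem_replicate hl] at hul
    obtain ⟨u', hu', rfl⟩ := List.mem_map.1 hul
    exact (hL u' hu').smul _
  · rw [List.sum_flatten, List.map_replicate, List.sum_replicate]
    have : L1.sum = (M : ℂ)⁻¹ • L.sum := List.smul_sum.symm
    rw [this, ← Nat.cast_smul_eq_nsmul ℂ, smul_smul, mul_inv_cancel₀, one_smul]
    exact_mod_cast hM0.ne'
  · rw [List.map_flatten, List.map_replicate, List.sum_flatten, List.map_replicate,
      List.sum_replicate]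
    have h1 : (L1.map fun u => ‖u‖ ^ 2).sum = ((M:ℝ)⁻¹) ^ 2 * K := by
      simp only [L1, K, List.map_map, Function.comp_def, norm_smul, norm_inv, mul_pow,
        Complex.norm_natCast]
      rw [List.sum_map_mul_left]
    rw [h1, nsmul_eq_mul]
    have h2 : (M:ℝ) * (((M:ℝ)⁻¹) ^ 2 * K) = K / M := by field_simp
    rw [h2, div_le_iff₀ hM0]
    rw [div_lt_iff₀ hη] at hMK
    linarith

open scoped Classical in
theorem aux_step {H : Type*} [NormedAddCommGroup H] [InnerProductSpace ℂ H]
    {T : H →L[ℂ] H} (hd : Dense (Submodule.span ℂ {u : H | AuxGood T u} : Set H))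
    {F : Finset Circle} (hF : AuxIndep F) (x : Circle → H) (w : H) {η : ℝ} (hη : 0 < η) :
    ∃ (F' : Finset Circle) (x' : Circle → H),
      F ⊆ F' ∧ AuxIndep F' ∧ (∀ c ∈ F, x' c = x c) ∧
      (∀ c ∈ F' \ F, T (x' c) = (c : ℂ) • x' c) ∧
      ∑ c ∈ F' \ F, ‖x' c‖ ^ 2 ≤ η ∧ ‖∑ c ∈ F' \ F, x' c - w‖ < η := by
  obtain ⟨w', hw', hww'⟩ := Metric.dense_iff.1 hd w (η / 2) (by positivity)
  obtain ⟨L, hL, hLs⟩ := aux_span hww'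
  obtain ⟨L', hL', hLs', hsq⟩ := aux_split L hL (η := η / 2) (by positivity)
  obtain ⟨F', x', h1, h2, h3, h4, h5, h6⟩ := aux_list hF x L' hL' (η / 2) (by positivity)
  refine ⟨F', x', h1, h2, h3, h4, by linarith, ?_⟩
  rw [hLs', hLs] at h6
  rw [Metric.mem_ball, dist_eq_norm] at hw'
  calc ‖∑ c ∈ F' \ F, x' c - w‖ ≤ ‖∑ c ∈ F' \ F, x' c - w'‖ + ‖w' - w‖ := norm_sub_le_norm_sub_add_norm_sub _ _ _
    _ < η := by linarith

open scoped Classical in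
theorem aux_final {H : Type*} [NormedAddCommGroup H] [InnerProductSpace ℂ H] [CompleteSpace H]
    [TopologicalSpace.SeparableSpace H] (T : H →L[ℂ] H) (hT : PerfectlySpanning T) :
    FrequentlyHypercyclic T := by
  have hd := aux_dense hT
  have : Nonempty H := ⟨0⟩
  let v : ℕ → H := fun j => TopologicalSpace.denseSeq H (Nat.unpair j).1
  let St := {p : Finset Circle × (Circle → H) //
    AuxIndep p.1 ∧ ∀ c ∈ p.1, T (p.2 c) = (c : ℂ) • p.2 c}
  have step : ∀ (j : ℕ) (p : St), ∃ q : St, p.1.1 ⊆ q.1.1 ∧ (∀ c ∈ p.1.1, q.1.2 c = p.1.2 c) ∧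
      ∑ c ∈ q.1.1 \ p.1.1, ‖q.1.2 c‖ ^ 2 ≤ ((1/2 : ℝ) ^ j) ^ 2 ∧
      ‖∑ c ∈ q.1.1, q.1.2 c - v j‖ < (1/2 : ℝ) ^ j := by
    rintro j ⟨⟨F, x⟩, hF, hx⟩
    obtain ⟨F', x', h1, h2, h3, h4, h5, h6⟩ := aux_step hd hF x (v j - ∑ c ∈ F, x c)
      (η := ((1/2 : ℝ) ^ j) ^ 2) (by positivity)
    refine ⟨⟨(F', x'), h2, ?_⟩, h1, h3, h5, ?_⟩
    · intro c hc
      by_cases hcF : c ∈ F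
      · change T (x' c) = (c : ℂ) • x' c
        rw [h3 c hcF]; exact hx c hcF
      · exact h4 c (Finset.mem_sdiff.2 ⟨hc, hcF⟩)
    · change ‖∑ c ∈ F', x' c - v j‖ < (1/2 : ℝ) ^ j
      rw [← Finset.sum_sdiff h1, Finset.sum_congr rfl h3]
      have h7 : ((1/2 : ℝ) ^ j) ^ 2 ≤ (1/2 : ℝ) ^ j :=
        pow_le_of_le_one (by positivity) (pow_le_one₀ (by norm_num) (by norm_num)) two_ne_zero
      refine lt_of_lt_of_le ?_ h7
      have e : ∑ c ∈ F' \ F, x' c + ∑ c ∈ F, x c - v j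
          = ∑ c ∈ F' \ F, x' c - (v j - ∑ c ∈ F, x c) := by abel
      have h8 := h6
      rw [← e] at h8
      convert h8 using 2
  choose f hf1 hf2 hf3 hf4 using step
  let st : ℕ → St := fun n => Nat.rec ⟨(∅, 0), by simp [AuxIndep], by simp⟩ (fun j p => f j p) n
  have hst0 : (st 0).1.1 = ∅ := rfl
  have hsts : ∀ n, st (n+1) = f n (st n) := fun _ => rfl
  let F : ℕ → Finset Circle := fun n => (st n).1.1
  have hmono : Monotone F := monotone_nat_of_le_succ fun n => hf1 n (st n)
  have hconst : ∀ n m, n ≤ m → ∀ c ∈ F n, (st m).1.2 c = (st n).1.2 c := by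
    intro n m hnm
    induction m, hnm using Nat.le_induction with
    | base => exact fun _ _ => rfl
    | succ m hm ih =>
      intro c hc
      rw [← ih c hc]
      exact hf2 m (st m) c (hmono hm hc)
  let S : Set Circle := ⋃ n, (F n : Set Circle)
  have hS : ∀ c : S, ∃ n, (c : Circle) ∈ F n := fun c => by
    obtain ⟨n, hn⟩ := Set.mem_iUnion.1 c.2
    exact ⟨n, hn⟩
  have hFS : ∀ n, ∀ c ∈ F n, c ∈ S := fun n c hc => Set.mem_iUnion.2 ⟨n, hc⟩
  choose N hN using hS
  have hScount : Countable S :=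
    (Set.countable_iUnion fun n => (F n).countable_toSet).to_subtype
  let x : S → H := fun c => (st (N c)).1.2 c
  have hxn : ∀ n (c : S), (c : Circle) ∈ F n → x c = (st n).1.2 c := by
    intro n c hc
    rcases le_total n (N c) with h | h
    · exact hconst _ _ h c hc
    · exact (hconst _ _ h c (hN c)).symm
  have hsum1 : ∀ n (G : Finset Circle) (_ : G ⊆ F n),
      ∑ c ∈ G.subtype (· ∈ S), ‖x c‖ ^ 2 = ∑ c ∈ G, ‖(st n).1.2 c‖ ^ 2 := by
    intro n G hG
    rw [← Finset.sum_subtype_of_mem (p := (· ∈ S)) _ (fun c hc => hFS n c (hG hc))]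
    refine Finset.sum_congr rfl fun c hc => ?_
    rw [hxn n c (hG (Finset.mem_subtype.1 hc))]
  have hsum2 : ∀ n (G : Finset Circle) (_ : G ⊆ F n),
      ∑ c ∈ G.subtype (· ∈ S), x c = ∑ c ∈ G, (st n).1.2 c := by
    intro n G hG
    rw [← Finset.sum_subtype_of_mem (p := (· ∈ S)) _ (fun c hc => hFS n c (hG hc))]
    refine Finset.sum_congr rfl fun c hc => ?_
    rw [hxn n c (hG (Finset.mem_subtype.1 hc))]
  refine aux_main T (ι := S) (fun c => (c : Circle)) ?_ x ?_
    (fun n => (F n).subtype (· ∈ S)) ?_ ?_ v ?_ ?_ ?_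
  · have hdir : Directed (· ⊆ ·) (fun n => (F n : Set Circle)) :=
      (fun n m => ⟨max n m, Finset.coe_subset.2 (hmono (le_max_left _ _)),
        Finset.coe_subset.2 (hmono (le_max_right _ _))⟩)
    exact linearIndepOn_iUnion_of_directed hdir fun n => (st n).2.1
  · intro c
    exact (st (N c)).2.2 c (hN c)
  · intro n m hnm
    exact Finset.subtype_mono (hmono hnm)
  · change (F 0).subtype _ = ∅
    simp only [F, hst0]
    rfl
  · intro j
    refine le_trans (le_of_eq (Finset.sum_congr (s₂ := (F (j+1) \ F j).subtype (· ∈ S))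
      (by ext c; simp) fun _ _ => rfl)) ?_
    rw [hsum1 (j+1) _ Finset.sdiff_subset]
    exact hf3 j (st j)
  · intro j
    rw [hsum2 (j+1) (F (j+1)) subset_rfl]
    exact hf4 j (st j)
  · intro p ε hε n
    obtain ⟨m, hm⟩ := (TopologicalSpace.denseRange_denseSeq H).exists_dist_lt p hε
    refine ⟨Nat.pair m n, Nat.right_le_pair _ _, ?_⟩
    simpa [v, dist_comm p, dist_eq_norm] using hm

/-- If a bounded operator `T` on a complex separable infinite-dimensional Hilbert
space has a perfectly spanning set of eigenvectors associated to unimodular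
eigenvalues, then `T` is frequently hypercyclic. -/
theorem perfectlySpanning_implies_frequentlyHypercyclic_hilbert
    {H : Type*} [NormedAddCommGroup H] [InnerProductSpace ℂ H] [CompleteSpace H]
    [TopologicalSpace.SeparableSpace H] (hdim : ¬ FiniteDimensional ℂ H)
    (T : H →L[ℂ] H) (hT : PerfectlySpanning T) :
    FrequentlyHypercyclic T := by
  exact aux_final T hT
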